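/- arXiv:2311.03241 — 2 statements merged into one kernel-verified Lean document; each statement's English description precedes it below -/
import Mathlib

section
/- Suppose η is differentiable at b > 0. Then the one-sided second derivatives of v_b at x = b exist: the left second derivative equals η(b)·φ''(b)/φ'(b) and the right second derivative equals η'(b). Consequently, v_b is twice differentiable at b if and only if η(b)·φ''(b) = η'(b)·φ'(b). -/
/-!
Both branches of `v_b` have slope `η b` at `b`, so `v_b` is differentiable there, and near `b` the
derivative of `v_b` is `(η b / φ' b) * φ'` on the left and `η` on the right, the point `b` included.
Differentiating these two functions at `b` gives the one-sided second derivatives, and a function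
with one-sided derivatives is differentiable exactly when they agree. The normalisation by `φ' b`
makes sense because `φ' b = exp (γ₊ b) - exp (γ₋ b)` and `γ₋ < 0 < γ₊`.
-/

open Filter MeasureTheory Set Topology

section OneSided

variable {E : Type*} [NormedAddCommGroup E] [NormedSpace ℝ E] {f g v : ℝ → E} {c l r : E} {b : ℝ}

theorem hasDerivAt_of_hasDerivWithinAt_Iic_Ici (hl : HasDerivWithinAt f c (Iic b) b)
    (hr : HasDerivWithinAt f c (Ici b) b) : HasDerivAt f c b := by
  simpa only [Iic_union_Ici, hasDerivWithinAt_univ] using hl.union hr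

theorem differentiableAt_iff_of_hasDerivWithinAt_Iic_Ici (hl : HasDerivWithinAt f l (Iic b) b)
    (hr : HasDerivWithinAt f r (Ici b) b) : DifferentiableAt ℝ f b ↔ l = r := by
  constructor
  · intro hf
    have hl_eq : l = deriv f b :=
      (uniqueDiffWithinAt_Iic b).eq_deriv _ hl hf.hasDerivAt.hasDerivWithinAt
    have hr_eq : r = deriv f b :=
      (uniqueDiffWithinAt_Ici b).eq_deriv _ hr hf.hasDerivAt.hasDerivWithinAt
    exact hl_eq.trans hr_eq.symm
  · rintro rfl
    exact (hasDerivAt_of_hasDerivWithinAt_Iic_Ici hl hr).differentiableAt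

theorem hasDerivAt_of_eventuallyEq_nhdsLE_nhdsGE (hvf : v =ᶠ[𝓝[≤] b] f) (hvg : v =ᶠ[𝓝[≥] b] g)
    (hf : HasDerivWithinAt f c (Iic b) b) (hg : HasDerivWithinAt g c (Ici b) b) :
    HasDerivAt v c b :=
  hasDerivAt_of_hasDerivWithinAt_Iic_Ici
    (hf.congr_of_eventuallyEq_of_mem hvf self_mem_Iic)
    (hg.congr_of_eventuallyEq_of_mem hvg self_mem_Ici)

theorem deriv_eventuallyEq_nhdsWithin_insert {s : Set ℝ} (hs : IsOpen s) (hvf : v =ᶠ[𝓝[s] b] f)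
    (hb : deriv v b = deriv f b) : deriv v =ᶠ[𝓝[insert b s] b] deriv f := by
  rw [EventuallyEq, eventually_iff, mem_nhdsWithin_insert]
  refine ⟨hb, ?_⟩
  filter_upwards [eventually_eventually_nhdsWithin.2 hvf, self_mem_nhdsWithin] with x hx hxs
  rw [hs.nhdsWithin_eq hxs] at hx
  exact EventuallyEq.deriv_eq hx

theorem hasDerivWithinAt_deriv_insert {s : Set ℝ} (hs : IsOpen s) (hvf : v =ᶠ[𝓝[s] b] f)
    (hb : deriv v b = deriv f b) (hf : HasDerivWithinAt (deriv f) c (insert b s) b) :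
    HasDerivWithinAt (deriv v) c (insert b s) b :=
  hf.congr_of_eventuallyEq_of_mem (deriv_eventuallyEq_nhdsWithin_insert hs hvf hb)
    (mem_insert b s)

theorem hasDerivWithinAt_deriv_Iic (hvf : v =ᶠ[𝓝[<] b] f) (hb : deriv v b = deriv f b)
    (hf : HasDerivWithinAt (deriv f) c (Iic b) b) : HasDerivWithinAt (deriv v) c (Iic b) b := by
  rw [← Iio_insert] at hf ⊢
  exact hasDerivWithinAt_deriv_insert isOpen_Iio hvf hb hf

theorem hasDerivWithinAt_deriv_Ici (hvf : v =ᶠ[𝓝[>] b] f) (hb : deriv v b = deriv f b)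
    (hf : HasDerivWithinAt (deriv f) c (Ici b) b) : HasDerivWithinAt (deriv v) c (Ici b) b := by
  rw [← Ioi_insert] at hf ⊢
  exact hasDerivWithinAt_deriv_insert isOpen_Ioi hvf hb hf

end OneSided

theorem eventually_hasDerivAt_integral {E : Type*} [NormedAddCommGroup E] [NormedSpace ℝ E]
    [CompleteSpace E] {f : ℝ → E} {b : ℝ} (hf : ∀ᶠ x in 𝓝 b, ContinuousAt f x) :
    ∀ᶠ x in 𝓝 b, HasDerivAt (fun y ↦ ∫ u in b..y, f u) (f x) x := by
  obtain ⟨ε, hε, hball⟩ := Metric.eventually_nhds_iff_ball.1 hf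
  filter_upwards [Metric.ball_mem_nhds b hε] with x hx
  have hsub : uIcc b x ⊆ Metric.ball b ε := by
    rw [Real.ball_eq_Ioo] at hx ⊢
    exact ordConnected_Ioo.uIcc_subset (by simpa using hε) hx
  have hint : IntervalIntegrable f volume b x :=
    ContinuousOn.intervalIntegrable fun y hy ↦ (hball y (hsub hy)).continuousWithinAt
  exact intervalIntegral.integral_hasDerivAt_right hint
    (ContinuousAt.stronglyMeasurableAtFilter Metric.isOpen_ball hball x hx) (hball x hx)

theorem stmt6_general {φ η v : ℝ → ℝ} {b : ℝ} (hφ : DifferentiableAt ℝ (deriv φ) b)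
    (hφb : deriv φ b ≠ 0) (hη : ∀ᶠ x in 𝓝 b, ContinuousAt η x) (hηb : DifferentiableAt ℝ η b)
    (hvl : ∀ᶠ x in 𝓝[≤] b, v x = η b / deriv φ b * φ x)
    (hvr : ∀ᶠ x in 𝓝[≥] b, v x = η b * φ b / deriv φ b + ∫ u in b..x, η u) :
    HasDerivWithinAt (deriv v) (η b * deriv (deriv φ) b / deriv φ b) (Iic b) b ∧
    HasDerivWithinAt (deriv v) (deriv η b) (Ici b) b ∧
    (DifferentiableAt ℝ (deriv v) b ↔ η b * deriv (deriv φ) b = deriv η b * deriv φ b) := by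
  set k := η b / deriv φ b with hk
  set f : ℝ → ℝ := fun x ↦ k * φ x
  set g : ℝ → ℝ := fun x ↦ η b * φ b / deriv φ b + ∫ u in b..x, η u
  have hf : HasDerivAt f (η b) b := by
    have h := (differentiableAt_of_deriv_ne_zero hφb).hasDerivAt.const_mul k
    rwa [hk, div_mul_cancel₀ _ hφb] at h
  have hg : ∀ᶠ x in 𝓝 b, HasDerivAt g (η x) x :=
    (eventually_hasDerivAt_integral hη).mono fun x hx ↦ hx.const_add _
  have hv : HasDerivAt v (η b) b :=
    hasDerivAt_of_eventuallyEq_nhdsLE_nhdsGE hvl hvr hf.hasDerivWithinAt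
      hg.self_of_nhds.hasDerivWithinAt
  have hf' : HasDerivAt (deriv f) (η b * deriv (deriv φ) b / deriv φ b) b := by
    rw [mul_div_right_comm, deriv_const_mul_field']
    exact hφ.hasDerivAt.const_mul k
  have hg' : HasDerivAt (deriv g) (deriv η b) b :=
    hηb.hasDerivAt.congr_of_eventuallyEq (hg.mono fun x hx ↦ hx.deriv)
  have hleft := hasDerivWithinAt_deriv_Iic
    (hvl.filter_mono (nhdsWithin_mono b Iio_subset_Iic_self))
    (hv.deriv.trans hf.deriv.symm) hf'.hasDerivWithinAt
  have hright := hasDerivWithinAt_deriv_Ici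
    (hvr.filter_mono (nhdsWithin_mono b Ioi_subset_Ici_self))
    (hv.deriv.trans hg.self_of_nhds.deriv.symm) hg'.hasDerivWithinAt
  refine ⟨hleft, hright, ?_⟩
  rw [differentiableAt_iff_of_hasDerivWithinAt_Iic_Ici hleft hright, div_eq_iff hφb]

section ReflectedSolution

variable {p q : ℝ}

/-- The combination of the exponentials of rates `p` and `q` whose derivative vanishes at `0`.
For `p` and `q` the roots `γ₊` and `γ₋` of `σ² γ² / 2 + μ γ = r`, it is a solution `φ` of
`σ² φ'' / 2 + μ φ' = r φ` with `φ' 0 = 0`. The term of a zero rate has the junk value `0`. -/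
noncomputable def reflectedSolution (p q x : ℝ) : ℝ :=
  Real.exp (p * x) / p - Real.exp (q * x) / q

theorem hasDerivAt_exp_const_mul_div_const (hp : p ≠ 0) (x : ℝ) :
    HasDerivAt (fun y ↦ Real.exp (p * y) / p) (Real.exp (p * x)) x := by
  simpa only [id_eq, mul_one, mul_div_cancel_right₀ _ hp] using
    ((hasDerivAt_id x).const_mul p).exp.div_const p

theorem deriv_reflectedSolution (hp : p ≠ 0) (hq : q ≠ 0) :
    deriv (reflectedSolution p q) = fun x ↦ Real.exp (p * x) - Real.exp (q * x) :=
  funext fun x ↦ ((hasDerivAt_exp_const_mul_div_const hp x).sub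
    (hasDerivAt_exp_const_mul_div_const hq x)).deriv

theorem differentiable_deriv_reflectedSolution (hp : p ≠ 0) (hq : q ≠ 0) :
    Differentiable ℝ (deriv (reflectedSolution p q)) := by
  rw [deriv_reflectedSolution hp hq]
  fun_prop

theorem deriv_reflectedSolution_ne_zero (hp : p ≠ 0) (hq : q ≠ 0) (hpq : p ≠ q) {x : ℝ}
    (hx : x ≠ 0) : deriv (reflectedSolution p q) x ≠ 0 := by
  rw [deriv_reflectedSolution hp hq, sub_ne_zero, Real.exp_injective.ne_iff]
  exact (mul_left_injective₀ hx).ne hpq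

end ReflectedSolution

theorem abs_lt_sqrt_sq_add (a : ℝ) {c : ℝ} (hc : 0 < c) : |a| < √(a ^ 2 + c) :=
  Real.lt_sqrt_of_sq_lt (by rw [sq_abs]; exact lt_add_of_pos_right _ hc)

theorem neg_add_sqrt_sq_add_pos (a : ℝ) {c : ℝ} (hc : 0 < c) : 0 < -a + √(a ^ 2 + c) := by
  linarith [le_abs_self a, abs_lt_sqrt_sq_add a hc]

theorem neg_sub_sqrt_sq_add_neg (a : ℝ) {c : ℝ} (hc : 0 < c) : -a - √(a ^ 2 + c) < 0 := by
  linarith [neg_le_abs a, abs_lt_sqrt_sq_add a hc]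

/-- If `η` is differentiable at `b > 0`, the one-sided second derivatives of `v_b` at `b`
exist: the left one equals `η(b)·φ''(b)/φ'(b)` and the right one equals `η'(b)`.
Consequently, `v_b` is twice differentiable at `b` iff `η(b)·φ''(b) = η'(b)·φ'(b)`. -/
theorem stmt6 (μ σ r : ℝ) (hσ : 0 < σ) (hr : 0 < r)
    (γp γm : ℝ)
    (hγp : γp = (-μ + Real.sqrt (μ ^ 2 + 2 * r * σ ^ 2)) / σ ^ 2)
    (hγm : γm = (-μ - Real.sqrt (μ ^ 2 + 2 * r * σ ^ 2)) / σ ^ 2)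
    (φ : ℝ → ℝ)
    (hφ : ∀ x, φ x = Real.exp (γp * x) / γp - Real.exp (γm * x) / γm)
    (η : ℝ → ℝ) (hη : ContinuousOn η (Set.Ici 0))
    (b : ℝ) (hb : 0 < b) (hηb : DifferentiableAt ℝ η b)
    (vb : ℝ → ℝ)
    (hvb1 : ∀ x ∈ Set.Icc 0 b, vb x = (η b / deriv φ b) * φ x)
    (hvb2 : ∀ x ∈ Set.Ici b, vb x = η b * φ b / deriv φ b + ∫ u in b..x, η u) :
    HasDerivWithinAt (deriv vb) (η b * deriv (deriv φ) b / deriv φ b) (Set.Iic b) b ∧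
    HasDerivWithinAt (deriv vb) (deriv η b) (Set.Ici b) b ∧
    (DifferentiableAt ℝ (deriv vb) b ↔ η b * deriv (deriv φ) b = deriv η b * deriv φ b) := by
  obtain rfl : φ = reflectedSolution γp γm := funext hφ
  have hc : 0 < 2 * r * σ ^ 2 := by positivity
  have hp : 0 < γp := hγp ▸ div_pos (neg_add_sqrt_sq_add_pos μ hc) (by positivity)
  have hm : γm < 0 := hγm ▸ div_neg_of_neg_of_pos (neg_sub_sqrt_sq_add_neg μ hc) (by positivity)
  exact stmt6_general (differentiable_deriv_reflectedSolution hp.ne' hm.ne b)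
    (deriv_reflectedSolution_ne_zero hp.ne' hm.ne (hm.trans hp).ne' hb.ne')
    ((lt_mem_nhds hb).mono fun x hx ↦ hη.continuousAt (Ici_mem_nhds hx)) hηb
    (eventually_of_mem (Icc_mem_nhdsLE hb) hvb1) (eventually_mem_nhdsWithin.mono hvb2)
end

section
/- For the parameter values σ = √2, μ = 0.508378, r = 0.00520074, let b ∈ (4.18, 4.19) satisfy the smooth-fit equation b² − b = (e^{γ₊b} − e^{γ₋b})/(γ₊e^{γ₊b} − γ₋e^{γ₋b}). Then the barrier-policy value v_b fails the Hamilton–Jacobi–Bellman inequality ℒv_b ≤ 0: there exists x > b such that −r·v_b(x) + μ·(1 − 1/x) + (σ²/2)·(1/x²) > 0. -/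
/-!
The scale function `φ` solves `(σ²/2) φ'' + μ φ' = r φ`, so smooth fit `η(b) φ''(b) = η'(b) φ'(b)`
says exactly that `ℒv_b` vanishes at the barrier `b`. Above `b`, where `v_b' = η`, what is left is
`ℒv_b(x) = μ (η(x) - η(b)) + (σ²/2) (η'(x) - η'(b)) - r ∫_b^x η`, an elementary function when
`η(x) = 1 - 1/x`. For the given parameters it starts at zero and decreases immediately to the right
of `b`, but it has become positive at `x = 7`, near its maximum of about `2 * 10⁻⁴`.
-/

/-- The exponents `γ` for which `x ↦ e^{γ x}` is harmonic for the generator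
`(σ²/2) ∂² + μ ∂ - r` of a Brownian motion with drift killed at rate `r`. -/
def IsCharacteristicRoot (σ μ r γ : ℝ) : Prop :=
  σ ^ 2 / 2 * γ ^ 2 + μ * γ = r

/-- The function `φ` of the statement, for arbitrary exponents. It is normalised so that
`φ'(0) = 0`. -/
noncomputable def scaleFunction (γ₁ γ₂ x : ℝ) : ℝ :=
  Real.exp (γ₁ * x) / γ₁ - Real.exp (γ₂ * x) / γ₂

/-- The marginal reward `η` of the statement, extended by `0` to the negative half-line. -/
noncomputable def marginalReward (x : ℝ) : ℝ :=
  if 0 < x then max (1 - 1 / x) 0 else 0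

/-- The value `v_b(x)` of the policy with barrier `b`, for `x ≥ b`: an immediate payment
brings the state down to `b`, where the value is `η(b) φ(b) / φ'(b)`. -/
noncomputable def barrierValue (φ η : ℝ → ℝ) (b x : ℝ) : ℝ :=
  η b * φ b / deriv φ b + ∫ u in b..x, η u

/-- Smooth fit at the barrier `b`: the two branches of `v_b` have the same second derivative
at `b`. The condition `φ'(b) ≠ 0` makes the lower branch `(η(b) / φ'(b)) φ` meaningful. -/
structure IsSmoothFit (φ η : ℝ → ℝ) (b : ℝ) : Prop where
  deriv_ne_zero : deriv φ b ≠ 0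
  mul_deriv_deriv_eq : η b * deriv (deriv φ) b = deriv η b * deriv φ b

/-- The closed form of `ℒv_b(x)` for `x ≥ b > 1` under smooth fit with the marginal reward
`1 - 1 / x`; its sign decides the Hamilton–Jacobi–Bellman inequality. -/
noncomputable def hjbResidual (σ μ r b x : ℝ) : ℝ :=
  (1 / b - 1 / x) * (μ - σ ^ 2 / 2 * (1 / b + 1 / x)) - r * (x - b - Real.log (x / b))

section ScaleFunction

variable {σ μ r γ γ₁ γ₂ : ℝ}

theorem isCharacteristicRoot_iff (hσ : σ ≠ 0) (hdisc : 0 ≤ μ ^ 2 + 2 * r * σ ^ 2) :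
    IsCharacteristicRoot σ μ r γ ↔
      γ = (-μ + Real.sqrt (μ ^ 2 + 2 * r * σ ^ 2)) / σ ^ 2 ∨
        γ = (-μ - Real.sqrt (μ ^ 2 + 2 * r * σ ^ 2)) / σ ^ 2 := by
  have hdiscrim : discrim (σ ^ 2 / 2) μ (-r) =
      Real.sqrt (μ ^ 2 + 2 * r * σ ^ 2) * Real.sqrt (μ ^ 2 + 2 * r * σ ^ 2) := by
    rw [Real.mul_self_sqrt hdisc, discrim]
    ring
  have hroots := quadratic_eq_zero_iff (by positivity) hdiscrim γ
  rw [mul_div_cancel₀ (σ ^ 2) two_ne_zero, ← sub_eq_add_neg, sub_eq_zero, ← sq] at hroots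
  exact hroots

theorem IsCharacteristicRoot.ne_zero (h : IsCharacteristicRoot σ μ r γ) (hr : r ≠ 0) :
    γ ≠ 0 := by
  rintro rfl
  exact hr (by simpa [IsCharacteristicRoot] using h.symm)

theorem IsCharacteristicRoot.div_eq (h : IsCharacteristicRoot σ μ r γ) (hr : r ≠ 0) :
    r / γ = σ ^ 2 / 2 * γ + μ := by
  rw [div_eq_iff (h.ne_zero hr)]
  rw [IsCharacteristicRoot] at h
  linear_combination -h

theorem hasDerivAt_exp_const_mul (γ x : ℝ) :
    HasDerivAt (fun y ↦ Real.exp (γ * y)) (γ * Real.exp (γ * x)) x := by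
  simpa [mul_comm] using ((hasDerivAt_id x).const_mul γ).exp

theorem deriv_scaleFunction (h₁ : γ₁ ≠ 0) (h₂ : γ₂ ≠ 0) :
    deriv (scaleFunction γ₁ γ₂) = fun x ↦ Real.exp (γ₁ * x) - Real.exp (γ₂ * x) := by
  funext x
  have h := ((hasDerivAt_exp_const_mul γ₁ x).div_const γ₁).sub
    ((hasDerivAt_exp_const_mul γ₂ x).div_const γ₂)
  rw [mul_div_cancel_left₀ _ h₁, mul_div_cancel_left₀ _ h₂] at h
  exact h.deriv

theorem deriv_deriv_scaleFunction (h₁ : γ₁ ≠ 0) (h₂ : γ₂ ≠ 0) :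
    deriv (deriv (scaleFunction γ₁ γ₂)) =
      fun x ↦ γ₁ * Real.exp (γ₁ * x) - γ₂ * Real.exp (γ₂ * x) := by
  rw [deriv_scaleFunction h₁ h₂]
  funext x
  exact ((hasDerivAt_exp_const_mul γ₁ x).sub (hasDerivAt_exp_const_mul γ₂ x)).deriv

theorem mul_scaleFunction_eq_deriv (hr : r ≠ 0) (h₁ : IsCharacteristicRoot σ μ r γ₁)
    (h₂ : IsCharacteristicRoot σ μ r γ₂) (x : ℝ) :
    r * scaleFunction γ₁ γ₂ x = μ * deriv (scaleFunction γ₁ γ₂) x +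
      σ ^ 2 / 2 * deriv (deriv (scaleFunction γ₁ γ₂)) x := by
  rw [deriv_deriv_scaleFunction (h₁.ne_zero hr) (h₂.ne_zero hr),
    deriv_scaleFunction (h₁.ne_zero hr) (h₂.ne_zero hr)]
  calc r * scaleFunction γ₁ γ₂ x
      = r / γ₁ * Real.exp (γ₁ * x) - r / γ₂ * Real.exp (γ₂ * x) := by
        rw [scaleFunction]
        ring
    _ = μ * (Real.exp (γ₁ * x) - Real.exp (γ₂ * x)) +
          σ ^ 2 / 2 * (γ₁ * Real.exp (γ₁ * x) - γ₂ * Real.exp (γ₂ * x)) := by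
        rw [h₁.div_eq hr, h₂.div_eq hr]
        ring

end ScaleFunction

section MarginalReward

variable {b x : ℝ}

theorem marginalReward_of_one_le (hx : 1 ≤ x) : marginalReward x = 1 - 1 / x := by
  have hx₀ : 0 < x := by positivity
  rw [marginalReward, if_pos hx₀, max_eq_left (sub_nonneg.2 ((div_le_one hx₀).2 hx))]

theorem deriv_marginalReward (hx : 1 < x) : deriv marginalReward x = 1 / x ^ 2 := by
  have hloc : marginalReward =ᶠ[nhds x] fun y ↦ 1 - y⁻¹ := by
    filter_upwards [lt_mem_nhds hx] with y hy
    rw [marginalReward_of_one_le hy.le, one_div]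
  rw [hloc.deriv_eq, ((hasDerivAt_inv (by positivity)).const_sub 1).deriv]
  ring

theorem integral_marginalReward (hb : 1 ≤ b) (hbx : b ≤ x) :
    ∫ u in b..x, marginalReward u = x - b - Real.log (x / b) := by
  have hmem : (0 : ℝ) ∉ Set.uIcc b x := by
    rw [Set.uIcc_of_le hbx]
    exact fun h ↦ by linarith [h.1]
  calc ∫ u in b..x, marginalReward u = ∫ u in b..x, (1 - 1 / u) := by
        refine intervalIntegral.integral_congr fun u hu ↦ ?_
        rw [Set.uIcc_of_le hbx] at hu
        exact marginalReward_of_one_le (hb.trans hu.1)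
    _ = (∫ _ in b..x, (1 : ℝ)) - ∫ u in b..x, 1 / u :=
        intervalIntegral.integral_sub intervalIntegrable_const
          (intervalIntegral.intervalIntegrable_one_div
            (fun u hu h ↦ hmem (h ▸ hu)) continuousOn_id)
    _ = x - b - Real.log (x / b) := by
        rw [integral_one_div hmem, integral_one]

end MarginalReward

section SmoothFit

variable {σ μ r b x : ℝ} {φ η : ℝ → ℝ}

theorem isSmoothFit_marginalReward (hb : 1 < b)
    (hfit : b ^ 2 - b = deriv φ b / deriv (deriv φ) b) : IsSmoothFit φ marginalReward b := by
  have hpos : 0 < b ^ 2 - b := by nlinarith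
  have hne : deriv φ b ≠ 0 ∧ deriv (deriv φ) b ≠ 0 := by
    rw [← div_ne_zero_iff, ← hfit]
    exact hpos.ne'
  refine ⟨hne.1, ?_⟩
  rw [eq_div_iff hne.2] at hfit
  rw [marginalReward_of_one_le hb.le, deriv_marginalReward hb, ← hfit]
  field_simp

theorem IsSmoothFit.mul_value_at_barrier (h : IsSmoothFit φ η b)
    (hφ : r * φ b = μ * deriv φ b + σ ^ 2 / 2 * deriv (deriv φ) b) :
    r * (η b * φ b / deriv φ b) = μ * η b + σ ^ 2 / 2 * deriv η b := by
  rw [← mul_div_assoc, div_eq_iff h.deriv_ne_zero]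
  linear_combination η b * hφ + σ ^ 2 / 2 * h.mul_deriv_deriv_eq

theorem IsSmoothFit.generator_barrierValue (h : IsSmoothFit φ η b)
    (hφ : r * φ b = μ * deriv φ b + σ ^ 2 / 2 * deriv (deriv φ) b) (x : ℝ) :
    -r * barrierValue φ η b x + μ * η x + σ ^ 2 / 2 * deriv η x =
      μ * (η x - η b) + σ ^ 2 / 2 * (deriv η x - deriv η b) - r * ∫ u in b..x, η u := by
  rw [barrierValue]
  linear_combination -h.mul_value_at_barrier hφ

theorem IsSmoothFit.generator_barrierValue_marginalReward (h : IsSmoothFit φ marginalReward b)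
    (hφ : r * φ b = μ * deriv φ b + σ ^ 2 / 2 * deriv (deriv φ) b) (hb : 1 < b) (hbx : b ≤ x) :
    -r * barrierValue φ marginalReward b x + μ * (1 - 1 / x) + σ ^ 2 / 2 * (1 / x ^ 2) =
      hjbResidual σ μ r b x := by
  have hgen := h.generator_barrierValue hφ x
  have hx : 1 < x := hb.trans_le hbx
  rw [marginalReward_of_one_le hx.le, marginalReward_of_one_le hb.le, deriv_marginalReward hx,
    deriv_marginalReward hb, integral_marginalReward hb.le hbx] at hgen
  rw [hgen, hjbResidual]
  ring

end SmoothFit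

theorem half_le_log_seven_div {b : ℝ} (hb₀ : 0 < b) (hb : b ≤ 4.19) :
    1 / 2 ≤ Real.log (7 / b) := by
  have hexp : Real.exp 1 ≤ (7 / b) ^ 2 :=
    calc Real.exp 1 ≤ (7 / 4.19) ^ 2 := by linarith [Real.exp_one_lt_d9]
      _ ≤ (7 / b) ^ 2 := by gcongr
  have hlog : 1 ≤ Real.log ((7 / b) ^ 2) := (Real.le_log_iff_exp_le (by positivity)).2 hexp
  rw [Real.log_pow, Nat.cast_ofNat] at hlog
  linarith

theorem hjbResidual_seven_pos {b : ℝ} (hb : b ∈ Set.Ioo (4.18 : ℝ) 4.19) :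
    0 < hjbResidual (Real.sqrt 2) 0.508378 0.00520074 b 7 := by
  obtain ⟨hb₁, hb₂⟩ := hb
  have hb₀ : 0 < b := by linarith
  have hlower : 1 / 4.19 ≤ 1 / b := one_div_le_one_div_of_le hb₀ hb₂.le
  have hupper : 1 / b ≤ 1 / 4.18 := one_div_le_one_div_of_le (by norm_num) hb₁.le
  have hgain : 0.0958 * 0.12628 ≤ (1 / b - 1 / 7) * (0.508378 - (1 / b + 1 / 7)) :=
    mul_le_mul (by linarith) (by linarith) (by norm_num) (by linarith)
  have hcost : 7 - b - Real.log (7 / b) ≤ 2.32 := by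
    linarith [half_le_log_seven_div hb₀ hb₂.le]
  rw [hjbResidual, Real.sq_sqrt zero_le_two, div_self two_ne_zero, one_mul]
  linarith

/-- For `σ = √2`, `μ = 0.508378`, `r = 0.00520074` and `b ∈ (4.18, 4.19)` solving the
smooth-fit equation, the barrier value `v_b` fails the HJB inequality `ℒv_b ≤ 0`:
there is `x > b` with `−r·v_b(x) + μ·(1 − 1/x) + (σ²/2)·(1/x²) > 0`. -/
theorem stmt13 (σ μ r : ℝ)
    (hσ : σ = Real.sqrt 2) (hμ : μ = 0.508378) (hr : r = 0.00520074)
    (γp γm : ℝ)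
    (hγp : γp = (-μ + Real.sqrt (μ ^ 2 + 2 * r * σ ^ 2)) / σ ^ 2)
    (hγm : γm = (-μ - Real.sqrt (μ ^ 2 + 2 * r * σ ^ 2)) / σ ^ 2)
    (φ : ℝ → ℝ)
    (hφ : ∀ x, φ x = Real.exp (γp * x) / γp - Real.exp (γm * x) / γm)
    (η : ℝ → ℝ)
    (hη : ∀ x, η x = if 0 < x then max (1 - 1 / x) 0 else 0)
    (b : ℝ) (hb : b ∈ Set.Ioo (4.18 : ℝ) 4.19)
    (hfit : b ^ 2 - b =
      (Real.exp (γp * b) - Real.exp (γm * b)) /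
        (γp * Real.exp (γp * b) - γm * Real.exp (γm * b)))
    (vb : ℝ → ℝ)
    (hvb1 : ∀ x ∈ Set.Icc 0 b, vb x = (η b / deriv φ b) * φ x)
    (hvb2 : ∀ x ∈ Set.Ici b, vb x = η b * φ b / deriv φ b + ∫ u in b..x, η u) :
    ∃ x : ℝ, b < x ∧
      -r * vb x + μ * (1 - 1 / x) + σ ^ 2 / 2 * (1 / x ^ 2) > 0 := by
  have hb₁ : 1 < b := by linarith [hb.1]
  have hσ₀ : σ ≠ 0 := by
    rw [hσ]
    positivity
  have hr₀ : r ≠ 0 := by norm_num [hr]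
  have hdisc : 0 ≤ μ ^ 2 + 2 * r * σ ^ 2 := by
    rw [hr]
    positivity
  have hp : IsCharacteristicRoot σ μ r γp := (isCharacteristicRoot_iff hσ₀ hdisc).2 (.inl hγp)
  have hm : IsCharacteristicRoot σ μ r γm := (isCharacteristicRoot_iff hσ₀ hdisc).2 (.inr hγm)
  obtain rfl : φ = scaleFunction γp γm := funext hφ
  obtain rfl : η = marginalReward := funext hη
  have hsmooth : IsSmoothFit (scaleFunction γp γm) marginalReward b := by
    refine isSmoothFit_marginalReward hb₁ ?_
    rwa [deriv_deriv_scaleFunction (hp.ne_zero hr₀) (hm.ne_zero hr₀),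
      deriv_scaleFunction (hp.ne_zero hr₀) (hm.ne_zero hr₀)]
  have hb₇ : b < 7 := by linarith [hb.2]
  refine ⟨7, hb₇, ?_⟩
  rw [hvb2 7 hb₇.le, ← barrierValue, hsmooth.generator_barrierValue_marginalReward
    (mul_scaleFunction_eq_deriv hr₀ hp hm b) hb₁ hb₇.le, hσ, hμ, hr]
  exact hjbResidual_seven_pos hb
end
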